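/- Let H be a complex Hilbert space with dim H ≥ 2 and let B(H) denote the C*-algebra of bounded linear operators on H. Let G be a complex Banach space and let f : B(H) → G be a continuous mapping such that x*y = 0 implies f(x + y) = f(x) + f(y). Then there exist a continuous additive mapping T : B(H) → G and a unique continuous linear mapping Φ : B(H) → G such that f(x) = T(x) + Φ(x*x) for all x ∈ B(H). -/

import Mathlib

/-!
For a projection `p` that is Murray–von Neumann subequivalent to `1 - p`, orthogonality of suitable
elements shows that the polar form `f (x + y) - f x - f y` at `x, y ∈ p A` depends only on `x* y`.
Every polar form satisfies a cocycle identity; rescaling `x` by `s⁻¹` and `y, z` by `s` in it and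
letting `s → 0` yields biadditivity. Finitely many such projections summing to `1` make the polar
form biadditive on all of `A`, and the off-diagonal elements generate enough of `A` to write it as
`(x, y) ↦ B 1 (x* y)`. Half of its diagonal is the quadratic part of `f`; the rest is additive.
On a Hilbert space the projections come from colouring a Hilbert basis.
-/

open QuadraticMap (polar polar_comm)

section OrthogonalAdditivity

theorem polar_add_polar_add {A G : Type*} [AddCommGroup A] [AddCommGroup G] (f : A → G)
    (x y z : A) : polar f x y + polar f (x + y) z = polar f x (y + z) + polar f y z := by
  simp only [polar, add_assoc]
  abel

theorem additive_sub_half_polar {A G R : Type*} [AddCommGroup A] [AddCommGroup G] [DivisionRing R]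
    [NeZero (2 : R)] [Module R G] {f : A → G} {B : A →+ A →+ G}
    (hB : ∀ x y, B x y = polar f x y) (x y : A) :
    f (x + y) - (2⁻¹ : R) • polar f (x + y) (x + y) =
      (f x - (2⁻¹ : R) • polar f x x) + (f y - (2⁻¹ : R) • polar f y y) := by
  have hdiag : polar f (x + y) (x + y) = polar f x x + polar f y y + (2 : R) • polar f x y := by
    rw [← hB (x + y)]
    simp only [map_add, AddMonoidHom.add_apply, hB, polar_comm f y x, two_smul]
    abel
  rw [hdiag, smul_add, smul_add, inv_smul_smul₀ two_ne_zero]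
  nth_rw 3 [polar]
  abel

/-- Additivity on pairs of elements that are orthogonal in the sense `x* y = 0`. -/
def OrthogonallyAdditive {A G : Type*} [Mul A] [Star A] [Zero A] [Add A] [Add G]
    (f : A → G) : Prop :=
  ∀ x y : A, star x * y = 0 → f (x + y) = f x + f y

/-- Murray–von Neumann subequivalence of a projection `p` to its complement `1 - p`; the condition
`p * u = 0` says that the range of the partial isometry `u` lies under `1 - p`. -/
def IsSubequivalentToCompl {A : Type*} [MulZeroClass A] [Star A] (p : A) : Prop :=
  IsStarProjection p ∧ ∃ u : A, star u * u = p ∧ p * u = 0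

variable {A G : Type*} [Ring A] [StarRing A] [AddCommGroup G] {f : A → G}

namespace OrthogonallyAdditive

theorem map_zero (hf : OrthogonallyAdditive f) : f 0 = 0 := by
  simpa using hf 0 0

theorem polar_eq_zero (hf : OrthogonallyAdditive f) {x y : A} (hxy : star x * y = 0) :
    polar f x y = 0 := by
  rw [polar, hf x y hxy]
  abel

theorem polar_add_add (hf : OrthogonallyAdditive f) {x x' y y' : A} (hxx' : star x * x' = 0)
    (hxy' : star x * y' = 0) (hyx' : star y * x' = 0) (hyy' : star y * y' = 0) :
    polar f (x + x') (y + y') = polar f x y + polar f x' y' := by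
  have hsum : star (x + y) * (x' + y') = 0 := by
    simp only [star_add, add_mul, mul_add, hxx', hxy', hyx', hyy', add_zero]
  simp only [polar, add_add_add_comm x x' y y', hf _ _ hsum, hf _ _ hxx', hf _ _ hyy']
  abel

theorem polar_mul_mul_congr (hf : OrthogonallyAdditive f) {p : A} (hp : IsSubequivalentToCompl p)
    {x y x' y' : A} (h : star x * p * y = star x' * p * y') :
    polar f (p * x) (p * y) = polar f (p * x') (p * y') := by
  obtain ⟨⟨hpp, hps⟩, u, huu, hpu⟩ := hp
  have orthogonal_mul (a b : A) : star (p * a) * (u * b) = 0 := by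
    rw [star_mul, hps.star_eq, mul_assoc, ← mul_assoc p, hpu, zero_mul, mul_zero]
  have hup : star u * p = 0 := by rw [← hps.star_eq, ← star_mul, hpu, star_zero]
  -- Orthogonality of `p a + u p x` and `p b - u p y` trades values on `p A` for values on `u p A`.
  have transfer (a b : A) (hab : star a * p * b = star x * p * y) :
      polar f (p * a) (p * b) = -polar f (u * (p * x)) (u * (p * -y)) := by
    have hperp : star (p * a + u * (p * x)) * (p * b + u * (p * -y)) = 0 := calc
      _ = star a * (p * p) * b + star a * (p * u) * (p * -y) + star x * p * (star u * p) * b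
          - star x * (p * (star u * u) * p) * y := by
        simp only [star_add, star_mul, hps.star_eq]
        noncomm_ring
      _ = 0 := by
        rw [hpu, hup, huu, hpp.eq, hpp.eq, hab]
        simp only [mul_zero, zero_mul, add_zero, sub_self]
    rw [eq_neg_iff_add_eq_zero, ← hf.polar_add_add (orthogonal_mul _ _) (orthogonal_mul _ _)
      (orthogonal_mul _ _) (orthogonal_mul _ _), hf.polar_eq_zero hperp]
  rw [transfer x y rfl, transfer x' y' h.symm]

theorem polar_mul_add_right [Algebra ℝ A] [StarModule ℝ A] [TopologicalSpace A] [ContinuousAdd A]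
    [ContinuousSMul ℝ A] [TopologicalSpace G] [IsTopologicalAddGroup G] [T2Space G]
    (hf : OrthogonallyAdditive f) (hfc : Continuous f) {p : A} (hp : IsSubequivalentToCompl p)
    (x y z : A) :
    polar f (p * x) (p * (y + z)) = polar f (p * x) (p * y) + polar f (p * x) (p * z) := by
  have rescale (s : ℝ) (hs : s ≠ 0) (b : A) :
      polar f (p * x) (p * b) = polar f (p * s⁻¹ • x) (p * s • b) :=
    hf.polar_mul_mul_congr hp <| by
      simp only [star_smul, star_trivial, smul_mul_assoc, mul_smul_comm, smul_smul,
        mul_inv_cancel₀ hs, one_smul]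
  -- Rescaling leaves the pairings with `x` unchanged and multiplies that of `y` and `z` by `s ^ 2`.
  have cocycle (s : ℝ) (hs : s ≠ 0) :
      polar f (p * x) (p * y) + polar f (p * (x + s ^ 2 • y)) (p * z) =
        polar f (p * x) (p * (y + z)) + polar f (p * s • y) (p * s • z) := calc
    _ = polar f (p * s⁻¹ • x) (p * s • y) + polar f (p * (s⁻¹ • x + s • y)) (p * s • z) := by
      congr 1
      · exact rescale s hs y
      · refine hf.polar_mul_mul_congr hp ?_
        simp only [star_add, star_smul, star_trivial, add_mul, smul_add, smul_mul_assoc,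
          mul_smul_comm, smul_smul, mul_inv_cancel₀ hs, one_smul, pow_two]
    _ = polar f (p * s⁻¹ • x) (p * s • (y + z)) + polar f (p * s • y) (p * s • z) := by
      simp only [mul_add, smul_add, polar_add_polar_add]
    _ = polar f (p * x) (p * (y + z)) + polar f (p * s • y) (p * s • z) := by
      rw [← rescale s hs]
  have hlim : (fun s : ℝ ↦ polar f (p * x) (p * y) + polar f (p * x + s ^ 2 • (p * y)) (p * z)) =
      fun s ↦ polar f (p * x) (p * (y + z)) + polar f (s • (p * y)) (s • (p * z)) := by
    refine Continuous.ext_on (dense_compl_singleton (0 : ℝ)) ?_ ?_ fun s hs ↦ ?_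
    · unfold polar; fun_prop
    · unfold polar; fun_prop
    · simpa only [mul_add, mul_smul_comm] using cocycle s hs
  have hzero : polar f (0 : A) 0 = 0 := hf.polar_eq_zero (by rw [mul_zero])
  simpa [hzero] using (congrFun hlim 0).symm

variable {I : Type*} [Fintype I] {e : I → A}

theorem map_eq_sum (hf : OrthogonallyAdditive f) (he : CompleteOrthogonalIdempotents e)
    (hes : ∀ i, IsSelfAdjoint (e i)) (x : A) : f x = ∑ i, f (e i * x) := by
  have hsum (s : Finset I) : f (∑ i ∈ s, e i * x) = ∑ i ∈ s, f (e i * x) := by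
    induction s using Finset.cons_induction with
    | empty => simpa only [Finset.sum_empty] using hf.map_zero
    | cons i s hi ih =>
      have hperp : star (e i * x) * ∑ j ∈ s, e j * x = 0 := by
        rw [← Finset.sum_mul, star_mul, (hes i).star_eq, mul_assoc, ← mul_assoc (e i),
          he.mul_sum_of_notMem hi, zero_mul, mul_zero]
      rw [Finset.sum_cons, Finset.sum_cons, hf _ _ hperp, ih]
  rw [← hsum, ← Finset.sum_mul, he.complete, one_mul]

theorem polar_eq_sum (hf : OrthogonallyAdditive f) (he : CompleteOrthogonalIdempotents e)
    (hes : ∀ i, IsSelfAdjoint (e i)) (x y : A) :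
    polar f x y = ∑ i, polar f (e i * x) (e i * y) := by
  simp only [polar, hf.map_eq_sum he hes x, hf.map_eq_sum he hes y, hf.map_eq_sum he hes (x + y),
    mul_add, Finset.sum_sub_distrib]

theorem exists_biadditive_eq_polar [Algebra ℝ A] [StarModule ℝ A] [TopologicalSpace A]
    [ContinuousAdd A] [ContinuousSMul ℝ A] [TopologicalSpace G] [IsTopologicalAddGroup G]
    [T2Space G] (hf : OrthogonallyAdditive f) (hfc : Continuous f)
    (he : CompleteOrthogonalIdempotents e) (hsub : ∀ i, IsSubequivalentToCompl (e i)) :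
    ∃ B : A →+ A →+ G, ∀ x y, B x y = polar f x y := by
  have hes (i : I) : IsSelfAdjoint (e i) := (hsub i).1.isSelfAdjoint
  have add_right (x y z : A) : polar f x (y + z) = polar f x y + polar f x z := by
    simp only [hf.polar_eq_sum he hes x, hf.polar_mul_add_right hfc (hsub _),
      Finset.sum_add_distrib]
  exact ⟨AddMonoidHom.mk' (fun x ↦ AddMonoidHom.mk' (polar f x) (add_right x)) fun x y ↦ by
    ext z
    simp [polar_comm f _ z, add_right], fun _ _ ↦ rfl⟩

end OrthogonallyAdditive

end OrthogonalAdditivity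

section BalancedSubring

variable {A G : Type*} [Ring A] [StarRing A] [AddCommGroup G] {B : A →+ A →+ G}

/-- The elements that can be moved across a biadditive form `B`, as `z` moves across the pairing
`x* y`. -/
def balancedSubring (B : A →+ A →+ G) : Subring A where
  carrier := {z | ∀ x y, B x (z * y) = B (star z * x) y}
  mul_mem' {z w} hz hw x y := by rw [mul_assoc, hz, hw, star_mul, mul_assoc]
  one_mem' x y := by rw [one_mul, star_one, one_mul]
  add_mem' {z w} hz hw x y := by
    rw [add_mul, map_add, hz, hw, star_add, add_mul, map_add, AddMonoidHom.add_apply]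
  zero_mem' x y := by simp only [zero_mul, star_zero, map_zero, AddMonoidHom.zero_apply]
  neg_mem' {z} hz x y := by
    rw [neg_mul, map_neg, hz, star_neg, neg_mul, map_neg, AddMonoidHom.neg_apply]

theorem mem_balancedSubring_of_offDiagonal (hB : ∀ x y, star x * y = 0 → B x y = 0) {p w : A}
    (hp : IsStarProjection p) (hpw : p * w = w) (hwp : w * p = 0) : w ∈ balancedSubring B := by
  intro x y
  have congr_left {x x' y : A} (h : star (x - x') * y = 0) : B x y = B x' y := by
    rw [← sub_eq_zero, ← AddMonoidHom.sub_apply, ← map_sub, hB _ _ h]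
  have congr_right {x y y' : A} (h : star x * (y - y') = 0) : B x y = B x y' := by
    rw [← sub_eq_zero, ← map_sub, hB _ _ h]
  have hps : star p = p := hp.isSelfAdjoint.star_eq
  have hww : w * w = 0 := by rw [← hpw, mul_assoc, ← mul_assoc w, hwp, zero_mul, mul_zero]
  calc B x (w * y)
      = B (p * x) (w * y) := congr_left <| by
        rw [star_sub, star_mul, hps, sub_mul, mul_assoc (star x), ← mul_assoc p, hpw, sub_self]
    _ = B (p * x) (w * y + (1 - p) * y) := congr_right <| by
        rw [star_mul, hps, sub_add_cancel_left, mul_neg, mul_assoc, ← mul_assoc p,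
          hp.mul_one_sub_self, zero_mul, mul_zero, neg_zero]
    _ = B (star w * x) (w * y + (1 - p) * y) := congr_left <| by
        calc star (p * x - star w * x) * (w * y + (1 - p) * y)
            = star x * (p * w + p * (1 - p) - w * w - (w - w * p)) * y := by
              simp only [star_sub, star_mul, star_star, hps]
              noncomm_ring
          _ = 0 := by
              rw [hpw, hww, hwp, hp.mul_one_sub_self]
              noncomm_ring
    _ = B (star w * x) y := congr_right <| by
        calc star (star w * x) * (w * y + (1 - p) * y - y)
            = star x * (w * w - w * p) * y := by
              simp only [star_mul, star_star]
              noncomm_ring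
          _ = 0 := by rw [hww, hwp, sub_self, mul_zero, zero_mul]

theorem IsSubequivalentToCompl.mul_mem_balancedSubring
    (hB : ∀ x y, star x * y = 0 → B x y = 0) {p : A} (hp : IsSubequivalentToCompl p) (z : A) :
    p * z ∈ balancedSubring B := by
  obtain ⟨hproj, u, huu, hpu⟩ := hp
  have hps : star p = p := hproj.isSelfAdjoint.star_eq
  have hpp : p * p = p := hproj.isIdempotentElem.eq
  have hup : star u * p = 0 := by rw [← hps, ← star_mul, hpu, star_zero]
  have hsplit : p * z = p * z * (1 - p) + p * z * star u * (u * p) := by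
    rw [mul_assoc (p * z), ← mul_assoc (star u), huu, hpp, mul_sub, mul_one, sub_add_cancel]
  rw [hsplit]
  refine add_mem ?_ (mul_mem ?_ ?_)
  · refine mem_balancedSubring_of_offDiagonal hB hproj ?_ ?_
    · rw [← mul_assoc, ← mul_assoc, hpp]
    · rw [mul_assoc, hproj.one_sub_mul_self, mul_zero]
  · refine mem_balancedSubring_of_offDiagonal hB hproj ?_ ?_
    · rw [← mul_assoc, ← mul_assoc, hpp]
    · rw [mul_assoc, hup, mul_zero]
  · refine mem_balancedSubring_of_offDiagonal hB hproj.one_sub ?_ ?_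
    · rw [sub_mul, one_mul, ← mul_assoc, hpu, zero_mul, sub_zero]
    · rw [mul_assoc, hproj.mul_one_sub_self, mul_zero]

theorem balancedSubring_eq_top (hB : ∀ x y, star x * y = 0 → B x y = 0) {I : Type*} [Fintype I]
    {e : I → A} (he : ∑ i, e i = 1) (hsub : ∀ i, IsSubequivalentToCompl (e i)) :
    balancedSubring B = ⊤ := by
  refine (Subring.eq_top_iff' _).mpr fun z ↦ ?_
  rw [← one_mul z, ← he, Finset.sum_mul]
  exact sum_mem fun i _ ↦ (hsub i).mul_mem_balancedSubring hB z

theorem apply_eq_apply_one_star_mul (h : balancedSubring B = ⊤) (x y : A) :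
    B x y = B 1 (star x * y) := by
  have hx : star x ∈ balancedSubring B := h ▸ Subring.mem_top _
  rw [hx 1 y, star_star, mul_one]

end BalancedSubring

section SelfAdjointPart

open scoped ComplexStarModule

variable {A G : Type*} [TopologicalSpace A] [AddCommGroup G] [Module ℂ G]
  [TopologicalSpace G]

theorem exists_complexLinear_eqOn_selfAdjoint [AddCommGroup A] [Module ℂ A] [StarAddMonoid A]
    [StarModule ℂ A] [ContinuousConstSMul ℂ A] [IsTopologicalAddGroup G] [ContinuousConstSMul ℂ G]
    (Λ : A →L[ℝ] G) (hΛ : ∀ z, Λ (star z) = Λ z) :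
    ∃ Φ : A →L[ℂ] G, ∀ z, IsSelfAdjoint z → Φ z = Λ z := by
  let φ (z : A) : G := Λ z - Complex.I • Λ (Complex.I • z)
  have φ_add (z w : A) : φ (z + w) = φ z + φ w := by
    simp only [φ, smul_add, map_add]
    abel
  have φ_real_smul (r : ℝ) (z : A) : φ (r • z) = r • φ z := by
    simp only [φ, smul_sub, smul_comm Complex.I r, map_smul]
  have φ_I_smul (z : A) : φ (Complex.I • z) = Complex.I • φ z := by
    simp only [φ, smul_sub, smul_smul, Complex.I_mul_I, neg_one_smul, map_neg, smul_neg,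
      sub_neg_eq_add, add_comm]
  have φ_smul (c : ℂ) (z : A) : φ (c • z) = c • φ z := by
    have hc : c • z = c.re • z + c.im • Complex.I • z := by
      rw [← Complex.coe_smul, ← Complex.coe_smul, smul_smul, ← add_smul, Complex.re_add_im]
    rw [hc, φ_add, φ_real_smul, φ_real_smul, φ_I_smul, ← Complex.coe_smul, ← Complex.coe_smul,
      smul_smul, ← add_smul, Complex.re_add_im]
  have hφ : Continuous φ := by fun_prop
  refine ⟨⟨⟨⟨φ, φ_add⟩, φ_smul⟩, hφ⟩, fun z hz ↦ ?_⟩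
  have hI : Λ (Complex.I • z) = 0 := by
    have h := hΛ (Complex.I • z)
    rw [star_smul, hz.star_eq, Complex.star_def, Complex.conj_I, neg_smul, map_neg] at h
    linear_combination (norm := module) (-1 / 2 : ℂ) • h
  change φ z = Λ z
  simp only [φ, hI, smul_zero, sub_zero]

theorem continuousLinearMap_ext_star_mul_self [Ring A] [StarRing A] [Algebra ℂ A] [StarModule ℂ A]
    {Φ Ψ : A →L[ℂ] G} (h : ∀ x, Φ (star x * x) = Ψ (star x * x)) : Φ = Ψ := by
  have eqOn_selfAdjoint (a : A) (ha : IsSelfAdjoint a) : Φ a = Ψ a := by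
    have hsq : star (1 + a) * (1 + a) = star (1 : A) * 1 + star a * a + (2 : ℂ) • a := by
      rw [two_smul, star_add, star_one, ha.star_eq]
      noncomm_ring
    have h2 := h (1 + a)
    rw [hsq, map_add, map_add, map_add, map_add, h, h, map_smul, map_smul] at h2
    exact smul_right_injective G two_ne_zero (add_left_cancel h2)
  ext x
  rw [← realPart_add_I_smul_imaginaryPart x, map_add, map_add, map_smul,
    map_smul, eqOn_selfAdjoint _ (ℜ x).2, eqOn_selfAdjoint _ (ℑ x).2]

end SelfAdjointPart

section HilbertSpace

theorem exists_injective_coloring (ι : Type*) [Nontrivial ι] :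
    ∃ (n : ℕ) (c : ι → Fin n) (σ : ι → ι), Function.Injective σ ∧ ∀ i, c (σ i) ≠ c i := by
  rcases finite_or_infinite ι with hfin | hinf
  · obtain ⟨n, ⟨g⟩⟩ := Finite.exists_equiv_fin ι
    have hn : 1 < n := Fin.nontrivial_iff_two_le.mp g.symm.nontrivial
    obtain ⟨m, rfl⟩ := Nat.exists_eq_add_of_le' hn
    exact ⟨m + 2, g, fun i ↦ g.symm (g i + 1),
      g.symm.injective.comp ((add_left_injective 1).comp g.injective), fun i ↦ by simp⟩
  · obtain ⟨g⟩ : Nonempty (ι ≃ Bool × ι) := by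
      rw [← Cardinal.eq, Cardinal.mk_congr (Equiv.boolProdEquivSum ι), Cardinal.mk_sum,
        Cardinal.lift_id, Cardinal.add_eq_self (Cardinal.aleph0_le_mk ι)]
    refine ⟨2, fun i ↦ finTwoEquiv.symm (g i).1, fun i ↦ g.symm (!(g i).1, (g i).2), ?_, ?_⟩
    · exact g.symm.injective.comp <|
        (Bool.involutive_not.injective.prodMap Function.injective_id).comp g.injective
    · simp

open Submodule

variable {𝕜 H ι I : Type*} [RCLike 𝕜] [NormedAddCommGroup H] [InnerProductSpace 𝕜 H]

theorem continuousLinearMap_ext_hilbertBasis {E : Type*} [AddCommMonoid E] [Module 𝕜 E]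
    [TopologicalSpace E] [T2Space E] (b : HilbertBasis ι 𝕜 H) {S T : H →L[𝕜] E}
    (h : ∀ i, S (b i) = T (b i)) : S = T :=
  ContinuousLinearMap.ext_on (dense_iff_topologicalClosure_eq_top.mpr b.dense_span)
    (Set.forall_mem_range.mpr h)

theorem nontrivial_of_hilbertBasis (b : HilbertBasis ι 𝕜 H) (hdim : 2 ≤ Module.rank 𝕜 H) :
    Nontrivial ι := by
  by_contra hι
  rw [not_nontrivial_iff_subsingleton] at hι
  have := Fintype.ofFinite ι
  rw [rank_eq_card_basis b.toOrthonormalBasis.toBasis] at hdim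
  have htwo : 2 ≤ Fintype.card ι := by exact_mod_cast hdim
  have hone : Fintype.card ι ≤ 1 := Fintype.card_le_one_iff_subsingleton.mpr hι
  omega

variable [CompleteSpace H]

theorem exists_isometry_hilbertBasis (b : HilbertBasis ι 𝕜 H) {σ : ι → ι}
    (hσ : Function.Injective σ) : ∃ U : H →ₗᵢ[𝕜] H, ∀ i, U (b i) = b (σ i) := by
  classical
  let V := (b.orthonormal.comp σ hσ).orthogonalFamily.linearIsometry
  refine ⟨V.comp b.repr.toLinearIsometry, fun i ↦ ?_⟩
  change V (b.repr (b i)) = b (σ i)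
  rw [b.repr_self, OrthogonalFamily.linearIsometry_apply_single]
  simp

/-- For a colouring `c` of a Hilbert basis `b`, the orthogonal projection onto the closed span of
the basis vectors of colour `k`. -/
noncomputable def colorProjection (b : HilbertBasis ι 𝕜 H) (c : ι → I) (k : I) : H →L[𝕜] H :=
  (span 𝕜 (b '' (c ⁻¹' {k}))).topologicalClosure.starProjection

variable (b : HilbertBasis ι 𝕜 H) {c : ι → I}

theorem colorProjection_apply_self (i : ι) : colorProjection b c (c i) (b i) = b i :=
  starProjection_eq_self_iff.mpr <| le_topologicalClosure _ <| subset_span ⟨i, rfl, rfl⟩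

theorem colorProjection_apply_of_ne {i : ι} {k : I} (h : c i ≠ k) :
    colorProjection b c k (b i) = 0 := by
  refine (starProjection_apply_eq_zero_iff _).mpr ?_
  rw [orthogonal_closure]
  refine (isOrtho_span (s := {b i})).mpr ?_ (mem_span_singleton_self _)
  rintro _ rfl _ ⟨j, hj, rfl⟩
  exact b.orthonormal.2 fun hij ↦ h (hij ▸ hj)

theorem completeOrthogonalIdempotents_colorProjection [Fintype I] :
    CompleteOrthogonalIdempotents (colorProjection b c) := by
  classical
  refine CompleteOrthogonalIdempotents.iff_ortho_complete.mpr ⟨fun k l hkl ↦ ?_, ?_⟩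
  · refine continuousLinearMap_ext_hilbertBasis b fun i ↦ ?_
    rcases eq_or_ne (c i) l with rfl | hi
    · simp [colorProjection_apply_self, colorProjection_apply_of_ne b hkl.symm]
    · simp [colorProjection_apply_of_ne b hi]
  · refine continuousLinearMap_ext_hilbertBasis b fun i ↦ ?_
    rw [sum_apply, Finset.sum_eq_single (c i)
      (fun k _ hk ↦ colorProjection_apply_of_ne b hk.symm) (by simp), colorProjection_apply_self,
      one_apply_eq_self]

theorem isSubequivalentToCompl_colorProjection {σ : ι → ι} (hσ : Function.Injective σ)
    (hcσ : ∀ i, c (σ i) ≠ c i) (k : I) : IsSubequivalentToCompl (colorProjection b c k) := by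
  have hp : IsStarProjection (colorProjection b c k) := isStarProjection_starProjection
  obtain ⟨U, hU⟩ := exists_isometry_hilbertBasis b hσ
  have hUU : star U.toContinuousLinearMap * U.toContinuousLinearMap = 1 :=
    U.adjoint_comp_self
  refine ⟨hp, U.toContinuousLinearMap * colorProjection b c k, ?_, ?_⟩
  · rw [star_mul, hp.isSelfAdjoint.star_eq, mul_assoc, ← mul_assoc (star _), hUU, one_mul,
      hp.isIdempotentElem.eq]
  · refine continuousLinearMap_ext_hilbertBasis b fun i ↦ ?_
    rcases eq_or_ne (c i) k with rfl | hi
    · simp [colorProjection_apply_self, hU, colorProjection_apply_of_ne b (hcσ i)]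
    · simp [colorProjection_apply_of_ne b hi]

theorem exists_completeOrthogonalIdempotents_isSubequivalentToCompl
    (hdim : 2 ≤ Module.rank 𝕜 H) :
    ∃ (n : ℕ) (e : Fin n → H →L[𝕜] H),
      CompleteOrthogonalIdempotents e ∧ ∀ k, IsSubequivalentToCompl (e k) := by
  obtain ⟨w, b, -⟩ := exists_hilbertBasis 𝕜 H
  have := nontrivial_of_hilbertBasis b hdim
  obtain ⟨n, c, σ, hσ, hcσ⟩ := exists_injective_coloring w
  exact ⟨n, colorProjection b c, completeOrthogonalIdempotents_colorProjection b,
    isSubequivalentToCompl_colorProjection b hσ hcσ⟩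

end HilbertSpace

theorem continuous_orthogonally_additive_representation_boundedOperators_general
    {A : Type*} [Ring A] [StarRing A] [Algebra ℂ A] [StarModule ℂ A] [TopologicalSpace A]
    [ContinuousAdd A] [ContinuousSMul ℂ A]
    {G : Type*} [AddCommGroup G] [Module ℂ G] [TopologicalSpace G] [IsTopologicalAddGroup G]
    [ContinuousSMul ℂ G] [T2Space G]
    {I : Type*} [Fintype I] {e : I → A} (he : CompleteOrthogonalIdempotents e)
    (hsub : ∀ i, IsSubequivalentToCompl (e i))
    (f : A → G) (hfc : Continuous f) (hf : OrthogonallyAdditive f) :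
    ∃ T : A → G, Continuous T ∧ (∀ x y, T (x + y) = T x + T y) ∧
      ∃! Φ : A →L[ℂ] G, ∀ x, f x = T x + Φ (star x * x) := by
  have : ContinuousSMul ℝ A := IsScalarTower.continuousSMul ℂ
  have : ContinuousSMul ℝ G := IsScalarTower.continuousSMul ℂ
  obtain ⟨B, hB⟩ := hf.exists_biadditive_eq_polar hfc he hsub
  have hBmul : ∀ x y, B x y = B 1 (star x * y) := apply_eq_apply_one_star_mul <|
    balancedSubring_eq_top (fun x y h ↦ (hB x y).trans (hf.polar_eq_zero h)) he.complete hsub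
  have hBstar (z : A) : B 1 (star z) = B 1 z := by
    rw [← mul_one (star z), ← hBmul, hB, polar_comm, ← hB]
  have hB1 : Continuous (B 1) := by
    rw [funext (hB 1)]
    unfold polar
    fun_prop
  obtain ⟨Φ, hΦ⟩ := exists_complexLinear_eqOn_selfAdjoint ((B 1).toRealLinearMap hB1) hBstar
  have hΦB (x : A) : Φ (star x * x) = polar f x x := by
    rw [hΦ _ (.star_mul_self x), AddMonoidHom.coe_toRealLinearMap, ← hBmul, hB]
  refine ⟨fun x ↦ f x - (2⁻¹ : ℂ) • polar f x x, ?_, fun x y ↦ ?_, (2⁻¹ : ℂ) • Φ, fun x ↦ ?_,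
    fun Ψ hΨ ↦ continuousLinearMap_ext_star_mul_self fun x ↦ ?_⟩
  · unfold polar
    fun_prop
  · exact additive_sub_half_polar hB x y
  · rw [smul_apply, hΦB, sub_add_cancel]
  · rw [smul_apply, hΦB]
    linear_combination (norm := module) -hΨ x

/-- Proposition 6.1, second part.
Let `H` be a complex Hilbert space with `dim H ≥ 2` and `G` a complex Banach space.  If
`f : B(H) → G` is continuous and satisfies `x* ⬝ y = 0 → f(x+y) = f(x) + f(y)`, then
there are a continuous additive `T : B(H) → G` and a unique continuous linear
`Φ : B(H) → G` such that `f(x) = T(x) + Φ(x* ⬝ x)` for all `x ∈ B(H)`. -/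
theorem continuous_orthogonally_additive_representation_boundedOperators
    {H : Type*} [NormedAddCommGroup H] [InnerProductSpace ℂ H] [CompleteSpace H]
    (hdim : 2 ≤ Module.rank ℂ H)
    {G : Type*} [NormedAddCommGroup G] [NormedSpace ℂ G] [CompleteSpace G]
    (f : (H →L[ℂ] H) → G) (hfc : Continuous f)
    (hf : ∀ x y : H →L[ℂ] H, star x * y = 0 → f (x + y) = f x + f y) :
    ∃ T : (H →L[ℂ] H) → G, Continuous T ∧ (∀ x y : H →L[ℂ] H, T (x + y) = T x + T y) ∧
      ∃! Φ : (H →L[ℂ] H) →L[ℂ] G, ∀ x : H →L[ℂ] H, f x = T x + Φ (star x * x) := by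
  obtain ⟨n, e, he, hsub⟩ := exists_completeOrthogonalIdempotents_isSubequivalentToCompl hdim
  exact continuous_orthogonally_additive_representation_boundedOperators_general he hsub f hfc hf
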